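/- Let X be a smooth extremal surface of degree q+1 in ℙ³(k). Then Aut(X) acts transitively on the set of ordered triples of pairwise skew lines on X: for any pairwise skew lines L₁, L₂, L₃ on X and any pairwise skew lines M₁, M₂, M₃ on X, there exists g ∈ Aut(X) with g(Lᵢ) = Mᵢ for i = 1, 2, 3. -/

import Mathlib

open Module

/-! Basic setup: `k` is an algebraically closed field of characteristic `p > 0`,
`q = p^e`.  We model ℙ³(k) via linear subspaces of `k⁴ = Fin 4 → k`:
points, lines and planes of ℙ³(k) are subspaces of dimension 1, 2 and 3
respectively.  A hypersurface cut out by a homogeneous form is recorded by its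
affine cone in `k⁴`. -/

/-- The Frobenius form in 4 variables determined by a 4×4 matrix `A`:
`∑ i j, A i j * x i ^ q * x j`, a homogeneous form of degree `q+1`. -/
def frobForm {k : Type*} [Field k] (q : ℕ) (A : Matrix (Fin 4) (Fin 4) k)
    (x : Fin 4 → k) : k :=
  ∑ i, ∑ j, A i j * x i ^ q * x j

/-- The affine cone in `k⁴` of the extremal surface in ℙ³(k) cut out by the
Frobenius form with matrix `A`; a point of ℙ³(k) lies on the surface iff its
homogeneous coordinate representatives lie in this set. -/
def extremalCone (k : Type*) [Field k] (q : ℕ) (A : Matrix (Fin 4) (Fin 4) k) :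
    Set (Fin 4 → k) :=
  {x | frobForm q A x = 0}

/-- A point of ℙ³(k): a 1-dimensional subspace of `k⁴`. -/
def IsPoint {k : Type*} [Field k] (c : Submodule k (Fin 4 → k)) : Prop :=
  finrank k c = 1

/-- A line of ℙ³(k): a 2-dimensional subspace of `k⁴`. -/
def IsLine {k : Type*} [Field k] (L : Submodule k (Fin 4 → k)) : Prop :=
  finrank k L = 2

/-- A plane of ℙ³(k): a 3-dimensional subspace of `k⁴`. -/
def IsPlane {k : Type*} [Field k] (H : Submodule k (Fin 4 → k)) : Prop :=
  finrank k H = 3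

/-- `L` is a line lying on the surface with affine cone `X`. -/
def IsLineOn {k : Type*} [Field k] (X : Set (Fin 4 → k))
    (L : Submodule k (Fin 4 → k)) : Prop :=
  IsLine L ∧ (L : Set (Fin 4 → k)) ⊆ X

/-- Two lines of ℙ³(k) meet iff the corresponding subspaces of `k⁴` intersect
nontrivially. -/
def MeetsLine {k : Type*} [Field k] (L M : Submodule k (Fin 4 → k)) : Prop :=
  L ⊓ M ≠ ⊥

/-- Two lines of ℙ³(k) are skew iff the corresponding subspaces of `k⁴`
intersect trivially. -/
def SkewLine {k : Type*} [Field k] (L M : Submodule k (Fin 4 → k)) : Prop :=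
  L ⊓ M = ⊥

/-- `IsStarAt q X S c`: `S` is a star on the surface with affine cone `X`,
centered at the point `c`, i.e. a set of `q+1` distinct lines on the surface
all passing through `c`. -/
def IsStarAt {k : Type*} [Field k] (q : ℕ) (X : Set (Fin 4 → k))
    (S : Set (Submodule k (Fin 4 → k))) (c : Submodule k (Fin 4 → k)) : Prop :=
  IsPoint c ∧ S.ncard = q + 1 ∧ ∀ L ∈ S, IsLineOn X L ∧ c ≤ L

/-- `S` is a star on the surface with affine cone `X`. -/
def IsStar {k : Type*} [Field k] (q : ℕ) (X : Set (Fin 4 → k))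
    (S : Set (Submodule k (Fin 4 → k))) : Prop :=
  ∃ c, IsStarAt q X S c

/-- `c` is a star point of the surface with affine cone `X`. -/
def IsStarPoint {k : Type*} [Field k] (q : ℕ) (X : Set (Fin 4 → k))
    (c : Submodule k (Fin 4 → k)) : Prop :=
  ∃ S, IsStarAt q X S c

/-- `H` is a star plane of the surface with affine cone `X`, centered at `c`:
the plane section `X ∩ H` is the union of a star centered at `c`. -/
def IsStarPlaneAt {k : Type*} [Field k] (q : ℕ) (X : Set (Fin 4 → k))
    (H c : Submodule k (Fin 4 → k)) : Prop :=
  IsPlane H ∧ ∃ S, IsStarAt q X S c ∧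
    X ∩ (H : Set (Fin 4 → k)) = ⋃ L ∈ S, (L : Set (Fin 4 → k))

/-- An element of `Aut(X)`: since every projective linear automorphism of
ℙ³(k) is represented by an invertible linear map of `k⁴` (uniquely up to
scalars, which act trivially on subspaces and preserve every cone), `g ∈
PGL(4,k)` with `g(X) = X` corresponds to a linear automorphism of `k⁴`
mapping the affine cone `X` onto itself. -/
def PreservesCone {k : Type*} [Field k] (X : Set (Fin 4 → k))
    (g : (Fin 4 → k) ≃ₗ[k] (Fin 4 → k)) : Prop :=
  (⇑g) '' X = X

/-! Three pairwise skew lines on `X` identify `k⁴` with `W × W`, `dim W = 2`, so that they become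
the two factors and the diagonal. Polarizing, each of them is totally isotropic for the
`q`-sesquilinear form `B` of `X`, and therefore `B((x, y), (x', y')) = β(x, y') - β(y, x')` for a
nondegenerate `q`-sesquilinear form `β` on `W`. Restricted to the line `y + t x`, `β` becomes a
separable polynomial in `t`; its roots yield isotropic vectors `u`, `v`, which rescale to
`β(u, v) = β(v, u) = 1`. So all such `β` are isometric, and an isometry `f` between two of them
gives the automorphism `f × f` of `X`. -/

section Field

variable {k : Type*} [Field k]

open Polynomial in
lemma exists_mul_pow_succ_add_mul_pow_add_mul_add_eq_zero [IsSepClosed k] {q : ℕ} (hq₀ : q ≠ 0)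
    (hq : (q : k) = 0) {a b c d : k} (hdet : a * d - b * c ≠ 0) :
    ∃ t : k, a * t ^ (q + 1) + b * t ^ q + c * t + d = 0 := by
  have hq₁ : q ≠ 1 := by rintro rfl; simp at hq
  let P : k[X] := C a * X ^ (q + 1) + C b * X ^ q + C c * X + C d
  have hP' : derivative P = C a * X ^ q + C c := by
    simp [P, derivative_X_pow, hq]
  have bezout : C a * P - (C a * X + C b) * derivative P = C (a * d - b * c) := by
    rw [hP']
    simp only [P, map_sub, map_mul]
    ring
  have separable : P.Separable := by
    refine ⟨C (a * d - b * c)⁻¹ * C a, -(C (a * d - b * c)⁻¹ * (C a * X + C b)), ?_⟩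
    calc _ = C (a * d - b * c)⁻¹ * (C a * P - (C a * X + C b) * derivative P) := by ring
      _ = 1 := by rw [bezout, ← C_mul, inv_mul_cancel₀ hdet, C_1]
  have degree_ne_zero : P.degree ≠ 0 := by
    intro hdeg
    have coeff_eq_zero {n : ℕ} (hn : 0 < n) : P.coeff n = 0 :=
      coeff_eq_zero_of_degree_lt (by rw [hdeg]; exact_mod_cast hn)
    have ha : a = 0 := by
      simpa [P, coeff_X, coeff_C, hq₀] using coeff_eq_zero q.succ_pos
    have hb : b = 0 := by
      simpa [P, coeff_X, coeff_C, hq₀, hq₁.symm] using coeff_eq_zero (Nat.pos_of_ne_zero hq₀)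
    simp [ha, hb] at hdet
  obtain ⟨t, ht⟩ := IsSepClosed.exists_root P degree_ne_zero separable
  exact ⟨t, by simpa [P] using ht⟩

lemma exists_pow_mul_mul_eq_one [IsSepClosed k] {q : ℕ} (hq₀ : q ≠ 0) (hq : (q : k) = 0)
    {b c : k} (hb : b ≠ 0) (hc : c ≠ 0) :
    ∃ s m : k, s ^ q * m * b = 1 ∧ m ^ q * s * c = 1 := by
  -- Eliminating `m = (s ^ q * b)⁻¹` leaves the Kummer equation `s ^ (q * q - 1) = c / b ^ q`.
  obtain ⟨n, hn⟩ : ∃ n, q * q = n + 1 := Nat.exists_eq_succ_of_ne_zero (mul_ne_zero hq₀ hq₀)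
  have hn' : (n : k) = -1 := by
    have : ((n + 1 : ℕ) : k) = 0 := by rw [← hn, Nat.cast_mul, hq, zero_mul]
    exact eq_neg_of_add_eq_zero_left (by simpa using this)
  have : NeZero (n : k) := ⟨by simp [hn']⟩
  have hn₀ : n ≠ 0 := by rintro rfl; simp at hn'
  obtain ⟨s, hs⟩ := IsSepClosed.exists_pow_nat_eq (c / b ^ q) n
  have hs₀ : s ≠ 0 := by
    rintro rfl
    rw [zero_pow hn₀] at hs
    exact div_ne_zero hc (pow_ne_zero q hb) hs.symm
  have hsq : (s ^ q) ^ q = c / b ^ q * s := by rw [← pow_mul, hn, pow_succ, hs]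
  refine ⟨s, (s ^ q * b)⁻¹, by field_simp, ?_⟩
  rw [inv_pow, mul_pow, hsq]
  field_simp

lemma iterateFrobenius_ne_id [IsSepClosed k] {p e : ℕ} [Fact p.Prime] [CharP k p] (he : e ≠ 0) :
    iterateFrobenius k p e ≠ RingHom.id k := by
  intro h
  obtain ⟨t, ht⟩ : ∃ t : k, 1 * t ^ p ^ e + -1 * t + -1 = 0 :=
    IsSepClosed.exists_root_C_mul_X_pow_add_C_mul_X_add_C' p (p ^ e) _ _ _ (dvd_pow_self p he)
      (Nat.one_lt_pow he (Fact.out : p.Prime).one_lt) (neg_ne_zero.mpr one_ne_zero)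
  have hfix : t ^ p ^ e = t := by rw [← iterateFrobenius_def, h, RingHom.id_apply]
  simp [hfix] at ht

end Field

section Sesquilinear

variable {R V W : Type*} [CommRing R] [AddCommGroup V] [Module R V] [AddCommGroup W] [Module R W]
  {σ : R →+* R}

/-- A subspace is totally isotropic for `B` when `B` vanishes identically on it, i.e. when it is
contained in its own orthogonal complement. -/
def IsTotallyIsotropic (B : V →ₛₗ[σ] V →ₗ[R] R) (L : Submodule R V) : Prop :=
  ∀ x ∈ L, ∀ y ∈ L, B x y = 0

lemma isTotallyIsotropic_of_forall_apply_self_eq_zero [NoZeroDivisors R] (hσ : σ ≠ RingHom.id R)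
    {B : V →ₛₗ[σ] V →ₗ[R] R} {L : Submodule R V} (h : ∀ x ∈ L, B x x = 0) :
    IsTotallyIsotropic B L := by
  intro x hx y hy
  have polarized (t : R) : t * B x y + σ t * B y x = 0 := by
    simpa [h x hx, h y hy] using h (x + t • y) (L.add_mem hx (L.smul_mem t hy))
  obtain ⟨t, ht⟩ : ∃ t, σ t ≠ t := by simpa [RingHom.ext_iff] using hσ
  have h_one : B x y + B y x = 0 := by simpa using polarized 1
  have hprod : (σ t - t) * B x y = 0 := by linear_combination σ t * h_one - polarized t
  exact (mul_eq_zero.mp hprod).resolve_left (sub_ne_zero.mpr ht)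

/-- The Gram determinant of the pair `(x, y)`. When `σ` is the `q`-Frobenius, its nonvanishing makes
the equation `β (y + t • x) (y + t • x) = 0` in `t` separable. -/
def gramDet (β : W →ₛₗ[σ] W →ₗ[R] R) (x y : W) : R :=
  β x x * β y y - β x y * β y x

lemma gramDet_swap (β : W →ₛₗ[σ] W →ₗ[R] R) (x y : W) : gramDet β y x = gramDet β x y := by
  simp only [gramDet]; ring

lemma gramDet_add_smul (β : W →ₛₗ[σ] W →ₗ[R] R) (x y : W) (t : R) :
    gramDet β x (y + t • x) = gramDet β x y := by
  simp only [gramDet, map_add, LinearMap.map_smulₛₗ, LinearMap.add_apply, LinearMap.smul_apply,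
    smul_eq_mul, RingHom.id_apply]
  ring

lemma gramDet_basis_ne_zero [IsDomain R] {β : W →ₛₗ[σ] W →ₗ[R] R} (hβ : β.SeparatingRight)
    (b : Basis (Fin 2) R W) : gramDet β (b 0) (b 1) ≠ 0 := by
  intro hdet
  obtain ⟨v, hv, hmul⟩ := Matrix.exists_mulVec_eq_zero_iff
    (M := Matrix.of fun i j => β (b i) (b j)).mpr (by rw [Matrix.det_fin_two]; exact hdet)
  have hker : β.flip (∑ j, v j • b j) = 0 := b.ext fun i => by
    simpa [Matrix.mulVec, dotProduct, mul_comm] using congrFun hmul i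
  have hsum : ∑ j, v j • b j = 0 := hβ _ fun x => LinearMap.congr_fun hker x
  exact hv (funext (Fintype.linearIndependent_iff.mp b.linearIndependent v hsum))

lemma linearIndependent_of_gramDet_ne_zero [NoZeroDivisors R] {β : W →ₛₗ[σ] W →ₗ[R] R} {x y : W}
    (h : gramDet β x y ≠ 0) : LinearIndependent R ![x, y] := by
  refine LinearIndependent.pair_iff.mpr fun s t hst => ?_
  have hx : s * β x x + t * β x y = 0 := by simpa using congrArg (β x) hst
  have hy : s * β y x + t * β y y = 0 := by simpa using congrArg (β y) hst
  have hs : gramDet β x y * s = 0 := by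
    simp only [gramDet]; linear_combination β y y * hx - β x y * hy
  have ht : gramDet β x y * t = 0 := by
    simp only [gramDet]; linear_combination β x x * hy - β y x * hx
  exact ⟨(mul_eq_zero.mp hs).resolve_left h, (mul_eq_zero.mp ht).resolve_left h⟩

end Sesquilinear

section Binary

variable {k W W' : Type*} [Field k] [IsSepClosed k] {p e : ℕ} [Fact p.Prime] [CharP k p]
  [AddCommGroup W] [Module k W] [AddCommGroup W'] [Module k W']

lemma exists_apply_add_smul_self_eq_zero (he : e ≠ 0)
    {β : W →ₛₗ[iterateFrobenius k p e] W →ₗ[k] k} {x y : W} (h : gramDet β x y ≠ 0) :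
    ∃ t : k, β (y + t • x) (y + t • x) = 0 := by
  obtain ⟨t, ht⟩ := exists_mul_pow_succ_add_mul_pow_add_mul_add_eq_zero
    (pow_ne_zero e (Fact.out : p.Prime).ne_zero)
    ((CharP.cast_eq_zero_iff k p _).mpr (dvd_pow_self p he)) h
  refine ⟨t, ?_⟩
  simp only [map_add, LinearMap.map_smulₛₗ, LinearMap.add_apply, LinearMap.smul_apply,
    smul_eq_mul, RingHom.id_apply, iterateFrobenius_def]
  linear_combination ht

lemma exists_hyperbolic_pair (he : e ≠ 0) {β : W →ₛₗ[iterateFrobenius k p e] W →ₗ[k] k} {x y : W}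
    (h : gramDet β x y ≠ 0) :
    ∃ u v : W, β u u = 0 ∧ β v v = 0 ∧ β u v = 1 ∧ β v u = 1 := by
  obtain ⟨t, hu⟩ := exists_apply_add_smul_self_eq_zero he h
  rw [← gramDet_add_smul β x y t, ← gramDet_swap] at h
  generalize y + t • x = u at hu h
  obtain ⟨r, hv⟩ := exists_apply_add_smul_self_eq_zero he h
  rw [← gramDet_add_smul β u x r] at h
  generalize x + r • u = v at hv h
  have huv : β u v * β v u ≠ 0 := by simpa [gramDet, hu] using h
  obtain ⟨s, m, hs, hm⟩ := exists_pow_mul_mul_eq_one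
    (pow_ne_zero e (Fact.out : p.Prime).ne_zero)
    ((CharP.cast_eq_zero_iff k p _).mpr (dvd_pow_self p he))
    (left_ne_zero_of_mul huv) (right_ne_zero_of_mul huv)
  refine ⟨s • u, m • v, ?_, ?_, ?_, ?_⟩ <;>
    simp only [map_smul, LinearMap.map_smulₛₗ, LinearMap.smul_apply, smul_eq_mul,
      iterateFrobenius_def, hu, hv, mul_zero]
  · linear_combination hs
  · linear_combination hm

lemma exists_basis_apply_eq_ite (he : e ≠ 0) {β : W →ₛₗ[iterateFrobenius k p e] W →ₗ[k] k}
    (hβ : β.SeparatingRight) (hW : finrank k W = 2) :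
    ∃ b : Basis (Fin 2) k W, ∀ i j, β (b i) (b j) = if i = j then 0 else 1 := by
  have : FiniteDimensional k W := .of_finrank_pos (by omega)
  obtain ⟨u, v, hu, hv, huv, hvu⟩ :=
    exists_hyperbolic_pair he (gramDet_basis_ne_zero hβ (finBasisOfFinrankEq k W hW))
  have hli : LinearIndependent k ![u, v] :=
    linearIndependent_of_gramDet_ne_zero (β := β) (by simp [gramDet, hu, huv, hvu])
  refine ⟨basisOfLinearIndependentOfCardEqFinrank hli (by simp [hW]), ?_⟩
  simp [Fin.forall_fin_two, hu, hv, huv, hvu]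

lemma exists_isometry_of_finrank_eq_two (he : e ≠ 0)
    {β : W →ₛₗ[iterateFrobenius k p e] W →ₗ[k] k} (hβ : β.SeparatingRight) (hW : finrank k W = 2)
    {β' : W' →ₛₗ[iterateFrobenius k p e] W' →ₗ[k] k} (hβ' : β'.SeparatingRight)
    (hW' : finrank k W' = 2) :
    ∃ f : W ≃ₗ[k] W', ∀ x y, β' (f x) (f y) = β x y := by
  obtain ⟨b, hb⟩ := exists_basis_apply_eq_ite he hβ hW
  obtain ⟨b', hb'⟩ := exists_basis_apply_eq_ite he hβ' hW'
  let f := b.equiv b' (Equiv.refl _)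
  have hf : (β' ∘ₛₗ f.toLinearMap).compl₂ f.toLinearMap = β :=
    LinearMap.ext_basis b b fun i j => by simp [f, hb, hb']
  exact ⟨f, fun x y => LinearMap.congr_fun₂ hf x y⟩

end Binary

section Triple

variable {R V W : Type*} [CommRing R] [AddCommGroup V] [Module R V] [AddCommGroup W] [Module R W]
  {σ : R →+* R} {L₁ L₂ L₃ : Submodule R V}

/-- Coordinates `V ≃ W × W` in which a triple of subspaces consists of the two factors and the
diagonal. -/
structure IsAdapted (E : (W × W) ≃ₗ[R] V) (L₁ L₂ L₃ : Submodule R V) : Prop where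
  mem_left_iff : ∀ x y, E (x, y) ∈ L₁ ↔ y = 0
  mem_right_iff : ∀ x y, E (x, y) ∈ L₂ ↔ x = 0
  mem_diag_iff : ∀ x y, E (x, y) ∈ L₃ ↔ x = y

lemma exists_isAdapted (h₁₂ : IsCompl L₁ L₂) (h₁₃ : IsCompl L₁ L₃) (h₂₃ : IsCompl L₂ L₃) :
    ∃ E : (L₁ × L₁) ≃ₗ[R] V, IsAdapted E L₁ L₂ L₃ := by
  -- `φ` is the projection of `L₁` onto `L₂` along `L₃`.
  let φ : L₁ ≃ₗ[R] L₂ :=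
    (L₃.quotientEquivOfIsCompl L₁ h₁₃.symm).symm ≪≫ₗ L₃.quotientEquivOfIsCompl L₂ h₂₃.symm
  have hφ (x : L₁) : (x : V) - φ x ∈ L₃ := by
    rw [← Submodule.Quotient.eq]
    exact (Submodule.mk_quotientEquivOfIsCompl_apply h₂₃.symm _).symm
  let E : (L₁ × L₁) ≃ₗ[R] V :=
    (LinearEquiv.refl R L₁).prodCongr (φ ≪≫ₗ .neg R) ≪≫ₗ Submodule.prodEquivOfIsCompl L₁ L₂ h₁₂
  have hE (x y : L₁) : E (x, y) = x - φ y := by simp [E, sub_eq_add_neg]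
  refine ⟨E, fun x y => ?_, fun x y => ?_, fun x y => ?_⟩
  · rw [hE, L₁.sub_mem_iff_right x.2,
      Submodule.mem_left_iff_eq_zero_of_disjoint h₁₂.disjoint, φ.map_eq_zero_iff]
  · rw [hE, L₂.sub_mem_iff_left (φ y).2,
      Submodule.mem_right_iff_eq_zero_of_disjoint h₁₂.disjoint]
  · have split : (x : V) - φ y = (x - y : L₁) + (y - φ y) := by simp
    rw [hE, split, L₃.add_mem_iff_left (hφ y),
      Submodule.mem_right_iff_eq_zero_of_disjoint h₁₃.disjoint, sub_eq_zero]

lemma IsAdapted.trans_prodCongr {W' : Type*} [AddCommGroup W'] [Module R W']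
    {E : (W × W) ≃ₗ[R] V} (hE : IsAdapted E L₁ L₂ L₃) (f : W' ≃ₗ[R] W) :
    IsAdapted (f.prodCongr f ≪≫ₗ E) L₁ L₂ L₃ where
  mem_left_iff x y := by simp [hE.mem_left_iff]
  mem_right_iff x y := by simp [hE.mem_right_iff]
  mem_diag_iff x y := by simp [hE.mem_diag_iff]

lemma IsAdapted.map_eq {V' : Type*} [AddCommGroup V'] [Module R V'] {M₁ M₂ M₃ : Submodule R V'}
    {E : (W × W) ≃ₗ[R] V} (hE : IsAdapted E L₁ L₂ L₃)
    {F : (W × W) ≃ₗ[R] V'} (hF : IsAdapted F M₁ M₂ M₃) :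
    L₁.map (E.symm ≪≫ₗ F).toLinearMap = M₁ ∧ L₂.map (E.symm ≪≫ₗ F).toLinearMap = M₂ ∧
      L₃.map (E.symm ≪≫ₗ F).toLinearMap = M₃ := by
  refine ⟨?_, ?_, ?_⟩ <;> ext z <;> obtain ⟨⟨x, y⟩, rfl⟩ := F.surjective z <;>
    rw [Submodule.mem_map_equiv]
  · simp [hE.mem_left_iff, hF.mem_left_iff]
  · simp [hE.mem_right_iff, hF.mem_right_iff]
  · simp [hE.mem_diag_iff, hF.mem_diag_iff]

/-- A triple of pairwise complementary totally isotropic subspaces: for the form of an extremal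
surface, three pairwise skew lines on it. -/
structure IsIsotropicTriple (B : V →ₛₗ[σ] V →ₗ[R] R) (L₁ L₂ L₃ : Submodule R V) : Prop where
  isotropic₁ : IsTotallyIsotropic B L₁
  isotropic₂ : IsTotallyIsotropic B L₂
  isotropic₃ : IsTotallyIsotropic B L₃
  isCompl₁₂ : IsCompl L₁ L₂
  isCompl₁₃ : IsCompl L₁ L₃
  isCompl₂₃ : IsCompl L₂ L₃

/-- The form on `W` that pairs the first factor of `V ≃ W × W` with the second through `B`. -/
def pairing (B : V →ₛₗ[σ] V →ₗ[R] R) (E : (W × W) ≃ₗ[R] V) : W →ₛₗ[σ] W →ₗ[R] R :=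
  (B ∘ₛₗ (E.toLinearMap ∘ₗ .inl R W W)).compl₂ (E.toLinearMap ∘ₗ .inr R W W)

lemma pairing_apply (B : V →ₛₗ[σ] V →ₗ[R] R) (E : (W × W) ≃ₗ[R] V) (x y : W) :
    pairing B E x y = B (E (x, 0)) (E (0, y)) := rfl

variable {B : V →ₛₗ[σ] V →ₗ[R] R} {E : (W × W) ≃ₗ[R] V}

lemma IsIsotropicTriple.apply_eq_pairing_sub_pairing (hL : IsIsotropicTriple B L₁ L₂ L₃)
    (hE : IsAdapted E L₁ L₂ L₃) (x y x' y' : W) :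
    B (E (x, y)) (E (x', y')) = pairing B E x y' - pairing B E y x' := by
  have expand (a b a' b' : W) : B (E (a, b)) (E (a', b')) =
      pairing B E a b' + B (E (0, b)) (E (a', 0)) := by
    have split (c d : W) : E (c, d) = E (c, 0) + E (0, d) := by simp [← map_add]
    have h₁ : B (E (a, 0)) (E (a', 0)) = 0 :=
      hL.isotropic₁ _ ((hE.mem_left_iff _ _).mpr rfl) _ ((hE.mem_left_iff _ _).mpr rfl)
    have h₂ : B (E (0, b)) (E (0, b')) = 0 :=
      hL.isotropic₂ _ ((hE.mem_right_iff _ _).mpr rfl) _ ((hE.mem_right_iff _ _).mpr rfl)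
    rw [split a b, split a' b', pairing_apply]
    simp only [map_add, LinearMap.add_apply]
    linear_combination h₁ + h₂
  have diagonal : B (E (y, y)) (E (x', x')) = 0 :=
    hL.isotropic₃ _ ((hE.mem_diag_iff _ _).mpr rfl) _ ((hE.mem_diag_iff _ _).mpr rfl)
  rw [expand] at diagonal ⊢
  linear_combination diagonal

lemma IsIsotropicTriple.separatingRight_pairing (hL : IsIsotropicTriple B L₁ L₂ L₃)
    (hE : IsAdapted E L₁ L₂ L₃) (hB : B.SeparatingRight) : (pairing B E).SeparatingRight := by
  intro y hy
  have hEy : E (0, y) = 0 := by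
    refine hB _ fun z => ?_
    obtain ⟨⟨a, b⟩, rfl⟩ := E.surjective z
    rw [hL.apply_eq_pairing_sub_pairing hE, hy, map_zero, sub_zero]
  simpa using hEy

end Triple

section Isometry

variable {k V V' : Type*} [Field k] [IsSepClosed k] {p e : ℕ} [Fact p.Prime] [CharP k p]
  [AddCommGroup V] [Module k V] [AddCommGroup V'] [Module k V']

theorem IsIsotropicTriple.exists_isometry_map_eq (he : e ≠ 0)
    {B : V →ₛₗ[iterateFrobenius k p e] V →ₗ[k] k} (hB : B.SeparatingRight)
    {B' : V' →ₛₗ[iterateFrobenius k p e] V' →ₗ[k] k} (hB' : B'.SeparatingRight)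
    {L₁ L₂ L₃ : Submodule k V} (hL : IsIsotropicTriple B L₁ L₂ L₃) (hL₁ : finrank k L₁ = 2)
    {M₁ M₂ M₃ : Submodule k V'} (hM : IsIsotropicTriple B' M₁ M₂ M₃) (hM₁ : finrank k M₁ = 2) :
    ∃ g : V ≃ₗ[k] V', (∀ x y, B' (g x) (g y) = B x y) ∧
      L₁.map g.toLinearMap = M₁ ∧ L₂.map g.toLinearMap = M₂ ∧ L₃.map g.toLinearMap = M₃ := by
  obtain ⟨E, hE⟩ := exists_isAdapted hL.isCompl₁₂ hL.isCompl₁₃ hL.isCompl₂₃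
  obtain ⟨F, hF⟩ := exists_isAdapted hM.isCompl₁₂ hM.isCompl₁₃ hM.isCompl₂₃
  obtain ⟨f, hf⟩ := exists_isometry_of_finrank_eq_two he
    (hL.separatingRight_pairing hE hB) hL₁ (hM.separatingRight_pairing hF hB') hM₁
  refine ⟨E.symm ≪≫ₗ f.prodCongr f ≪≫ₗ F, fun z w => ?_, hE.map_eq (hF.trans_prodCongr f)⟩
  obtain ⟨⟨x, y⟩, rfl⟩ := E.surjective z
  obtain ⟨⟨x', y'⟩, rfl⟩ := E.surjective w
  calc B' _ _ = B' (F (f x, f y)) (F (f x', f y')) := by simp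
    _ = pairing B E x y' - pairing B E y x' := by
      rw [hM.apply_eq_pairing_sub_pairing hF, hf, hf]
    _ = B (E (x, y)) (E (x', y')) := (hL.apply_eq_pairing_sub_pairing hE x y x' y').symm

end Isometry

section ExtremalSurface

lemma separatingRight_toLinearMapₛₗ₂' {R n : Type*} [CommRing R] [Fintype n] [DecidableEq n]
    (σ : R →+* R) {A : Matrix n n R} (hA : IsUnit A) :
    (A.toLinearMapₛₗ₂' R σ (RingHom.id R)).SeparatingRight := by
  intro y hy
  refine Matrix.mulVec_injective_of_isUnit hA ?_
  funext i
  simpa [Matrix.toLinearMapₛₗ₂'_apply, Pi.single_apply, Matrix.mulVec, dotProduct, mul_comm,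
    apply_ite σ] using hy (Pi.single i 1)

variable {k : Type*} [Field k] {A : Matrix (Fin 4) (Fin 4) k}

/-- The polarization of the Frobenius form of `A` for `q = p ^ e`: it is `q`-semilinear in the
first argument, linear in the second, and restricts to the Frobenius form on the diagonal. -/
def polarFrobForm (p e : ℕ) [ExpChar k p] (A : Matrix (Fin 4) (Fin 4) k) :
    (Fin 4 → k) →ₛₗ[iterateFrobenius k p e] (Fin 4 → k) →ₗ[k] k :=
  A.toLinearMapₛₗ₂' k (iterateFrobenius k p e) (RingHom.id k)

lemma polarFrobForm_self {p e : ℕ} [ExpChar k p] (x : Fin 4 → k) :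
    polarFrobForm p e A x x = frobForm (p ^ e) A x := by
  simp only [polarFrobForm, frobForm, Matrix.toLinearMapₛₗ₂'_apply, iterateFrobenius_def,
    RingHom.id_apply, smul_eq_mul]
  exact Finset.sum_congr rfl fun i _ => Finset.sum_congr rfl fun j _ => by ring

lemma preservesCone_of_frobForm_eq {q : ℕ} {g : (Fin 4 → k) ≃ₗ[k] (Fin 4 → k)}
    (hg : ∀ x, frobForm q A (g x) = frobForm q A x) : PreservesCone (extremalCone k q A) g := by
  have hpre : g ⁻¹' extremalCone k q A = extremalCone k q A :=
    Set.ext fun x => Eq.congr_left (hg x)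
  calc g '' extremalCone k q A = g '' (g ⁻¹' extremalCone k q A) := by rw [hpre]
    _ = extremalCone k q A := Set.image_preimage_eq _ g.surjective

lemma SkewLine.isCompl {L M : Submodule k (Fin 4 → k)} (h : SkewLine L M) (hL : IsLine L)
    (hM : IsLine M) : IsCompl L M := by
  refine (Submodule.isCompl_iff_disjoint L M ?_).mpr (disjoint_iff.mpr h)
  rw [hL, hM, finrank_fin_fun]

variable [IsSepClosed k] {p e : ℕ} [Fact p.Prime] [CharP k p]

lemma IsLineOn.isTotallyIsotropic (he : e ≠ 0) {L : Submodule k (Fin 4 → k)}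
    (hL : IsLineOn (extremalCone k (p ^ e) A) L) : IsTotallyIsotropic (polarFrobForm p e A) L :=
  isTotallyIsotropic_of_forall_apply_self_eq_zero (iterateFrobenius_ne_id he) fun x hx =>
    (polarFrobForm_self x).trans (hL.2 hx)

lemma isIsotropicTriple_of_skewLine (he : e ≠ 0)
    {L₁ L₂ L₃ : Submodule k (Fin 4 → k)}
    (hL₁ : IsLineOn (extremalCone k (p ^ e) A) L₁) (hL₂ : IsLineOn (extremalCone k (p ^ e) A) L₂)
    (hL₃ : IsLineOn (extremalCone k (p ^ e) A) L₃)
    (h₁₂ : SkewLine L₁ L₂) (h₁₃ : SkewLine L₁ L₃) (h₂₃ : SkewLine L₂ L₃) :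
    IsIsotropicTriple (polarFrobForm p e A) L₁ L₂ L₃ where
  isotropic₁ := hL₁.isTotallyIsotropic he
  isotropic₂ := hL₂.isTotallyIsotropic he
  isotropic₃ := hL₃.isTotallyIsotropic he
  isCompl₁₂ := h₁₂.isCompl hL₁.1 hL₂.1
  isCompl₁₃ := h₁₃.isCompl hL₁.1 hL₃.1
  isCompl₂₃ := h₂₃.isCompl hL₂.1 hL₃.1

end ExtremalSurface

theorem aut_transitive_on_skew_triples_general {k : Type*} [Field k] [IsSepClosed k]
    (p e q : ℕ) (hp : p.Prime) (hchar : CharP k p) (he : 1 ≤ e) (hq : q = p ^ e)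
    (A : Matrix (Fin 4) (Fin 4) k) (hA : IsUnit A)
    (L₁ L₂ L₃ M₁ M₂ M₃ : Submodule k (Fin 4 → k))
    (hL₁ : IsLineOn (extremalCone k q A) L₁)
    (hL₂ : IsLineOn (extremalCone k q A) L₂)
    (hL₃ : IsLineOn (extremalCone k q A) L₃)
    (hM₁ : IsLineOn (extremalCone k q A) M₁)
    (hM₂ : IsLineOn (extremalCone k q A) M₂)
    (hM₃ : IsLineOn (extremalCone k q A) M₃)
    (hL12 : SkewLine L₁ L₂) (hL13 : SkewLine L₁ L₃) (hL23 : SkewLine L₂ L₃)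
    (hM12 : SkewLine M₁ M₂) (hM13 : SkewLine M₁ M₃) (hM23 : SkewLine M₂ M₃) :
    ∃ g : (Fin 4 → k) ≃ₗ[k] (Fin 4 → k),
      PreservesCone (extremalCone k q A) g ∧
        Submodule.map (g : (Fin 4 → k) →ₗ[k] (Fin 4 → k)) L₁ = M₁ ∧
        Submodule.map (g : (Fin 4 → k) →ₗ[k] (Fin 4 → k)) L₂ = M₂ ∧
        Submodule.map (g : (Fin 4 → k) →ₗ[k] (Fin 4 → k)) L₃ = M₃ := by
  subst hq
  have : Fact p.Prime := ⟨hp⟩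
  have he₀ : e ≠ 0 := Nat.one_le_iff_ne_zero.mp he
  have hB : (polarFrobForm p e A).SeparatingRight := separatingRight_toLinearMapₛₗ₂' _ hA
  obtain ⟨g, hg, hmap⟩ := IsIsotropicTriple.exists_isometry_map_eq he₀ hB hB
    (isIsotropicTriple_of_skewLine he₀ hL₁ hL₂ hL₃ hL12 hL13 hL23) hL₁.1
    (isIsotropicTriple_of_skewLine he₀ hM₁ hM₂ hM₃ hM12 hM13 hM23) hM₁.1
  have hfrob (x : Fin 4 → k) : frobForm (p ^ e) A (g x) = frobForm (p ^ e) A x := by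
    simpa only [polarFrobForm_self] using hg x x
  exact ⟨g, preservesCone_of_frobForm_eq hfrob, hmap⟩

/-- `Aut(X)` acts transitively on ordered triples of
pairwise skew lines on a smooth extremal surface `X` of degree `q+1`:
for pairwise skew lines `L₁, L₂, L₃` on `X` and pairwise skew lines
`M₁, M₂, M₃` on `X` there is `g ∈ Aut(X)` (represented by an invertible
linear map of `k⁴` preserving the affine cone of `X`) with `g(Lᵢ) = Mᵢ`. -/
theorem aut_transitive_on_skew_triples {k : Type*} [Field k] [IsAlgClosed k]
    (p e q : ℕ) (hp : p.Prime) (hchar : CharP k p) (he : 1 ≤ e) (hq : q = p ^ e)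
    (A : Matrix (Fin 4) (Fin 4) k) (hA : IsUnit A)
    (L₁ L₂ L₃ M₁ M₂ M₃ : Submodule k (Fin 4 → k))
    (hL₁ : IsLineOn (extremalCone k q A) L₁)
    (hL₂ : IsLineOn (extremalCone k q A) L₂)
    (hL₃ : IsLineOn (extremalCone k q A) L₃)
    (hM₁ : IsLineOn (extremalCone k q A) M₁)
    (hM₂ : IsLineOn (extremalCone k q A) M₂)
    (hM₃ : IsLineOn (extremalCone k q A) M₃)
    (hL12 : SkewLine L₁ L₂) (hL13 : SkewLine L₁ L₃) (hL23 : SkewLine L₂ L₃)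
    (hM12 : SkewLine M₁ M₂) (hM13 : SkewLine M₁ M₃) (hM23 : SkewLine M₂ M₃) :
    ∃ g : (Fin 4 → k) ≃ₗ[k] (Fin 4 → k),
      PreservesCone (extremalCone k q A) g ∧
        Submodule.map (g : (Fin 4 → k) →ₗ[k] (Fin 4 → k)) L₁ = M₁ ∧
        Submodule.map (g : (Fin 4 → k) →ₗ[k] (Fin 4 → k)) L₂ = M₂ ∧
        Submodule.map (g : (Fin 4 → k) →ₗ[k] (Fin 4 → k)) L₃ = M₃ :=
  aut_transitive_on_skew_triples_general p e q hp hchar he hq A hA L₁ L₂ L₃ M₁ M₂ M₃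
    hL₁ hL₂ hL₃ hM₁ hM₂ hM₃ hL12 hL13 hL23 hM12 hM13 hM23
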